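/- If d ≥ 3, then for every r ∈ ℤ^d one has ∫_t^∞ p(u; 0, r) du ~ 2γ_d/((d-2) t^{d/2-1}) as t → ∞; that is, lim_{t→∞} t^{d/2-1} ∫_t^∞ p(u; 0, r) du = 2γ_d/(d-2). -/

import Mathlib

open MeasureTheory Real Filter Topology Asymptotics

/-- Fourier symbol `φ(θ) = ∑_z a(z) cos⟨z,θ⟩` of the random walk on `ℤ^d`. -/
noncomputable def phiSymb (d : ℕ) (a : (Fin d → ℤ) → ℝ) (θ : Fin d → ℝ) : ℝ :=
  ∑' z : Fin d → ℤ, a z * Real.cos (∑ i, (z i : ℝ) * θ i)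

/-- Transition probability `p(t;x,y) = (2π)^{-d} ∫_{[-π,π]^d} e^{φ(θ)t} cos⟨θ,y-x⟩ dθ`. -/
noncomputable def ptrans (d : ℕ) (a : (Fin d → ℤ) → ℝ) (t : ℝ) (x y : Fin d → ℤ) : ℝ :=
  ((2 * π) ^ d)⁻¹ *
    ∫ θ in Set.Icc (fun _ : Fin d => -π) (fun _ : Fin d => π),
      Real.exp (phiSymb d a θ * t) * Real.cos (∑ i, θ i * ((y i : ℝ) - (x i : ℝ)))

/-- Laplace transform `G_λ(x,y) = ∫_0^∞ e^{-λt} p(t;x,y) dt` (Green's function at `λ = 0`). -/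
noncomputable def Glam (d : ℕ) (a : (Fin d → ℤ) → ℝ) (lam : ℝ) (x y : Fin d → ℤ) : ℝ :=
  ∫ t in Set.Ioi (0 : ℝ), Real.exp (-lam * t) * ptrans d a t x y

/-- Hessian matrix `φ''(0)`, with entries `-∑_z a(z) z_i z_j`. -/
noncomputable def hessPhi (d : ℕ) (a : (Fin d → ℤ) → ℝ) : Matrix (Fin d) (Fin d) ℝ :=
  Matrix.of fun i j => -∑' z : Fin d → ℤ, a z * (z i : ℝ) * (z j : ℝ)

/-- `γ_d = (2π)^{-d/2} |det φ''(0)|^{-1/2}`. -/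
noncomputable def gammaConst (d : ℕ) (a : (Fin d → ℤ) → ℝ) : ℝ :=
  ((2 * π) ^ ((d : ℝ) / 2))⁻¹ * (Real.sqrt |(hessPhi d a).det|)⁻¹

/-- `ρ_d(x) = (a/(2π)^d) ∫_{[-π,π]^d} (cos⟨x,θ⟩ - 1)/φ(θ) dθ` for `x ≠ 0`, and `ρ_d(0) = 1`. -/
noncomputable def rhoConst (d : ℕ) (a : (Fin d → ℤ) → ℝ) (x : Fin d → ℤ) : ℝ :=
  if x = 0 then 1 else
    (-(a 0) / (2 * π) ^ d) *
      ∫ θ in Set.Icc (fun _ : Fin d => -π) (fun _ : Fin d => π),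
        (Real.cos (∑ i, (x i : ℝ) * θ i) - 1) / phiSymb d a θ

/-- `γ̃_d(z) = (1/(2(2π)^d)) ∫_{ℝ^d} ⟨v,z⟩² e^{⟨φ''(0)v,v⟩/2} dv`. -/
noncomputable def gammaTilde (d : ℕ) (a : (Fin d → ℤ) → ℝ) (z : Fin d → ℤ) : ℝ :=
  (2 * (2 * π) ^ d)⁻¹ *
    ∫ v : Fin d → ℝ, (∑ i, v i * (z i : ℝ)) ^ 2 *
      Real.exp ((∑ i, (hessPhi d a).mulVec v i * v i) / 2)

/-! Laplace's method at the maximum `θ = 0` of `φ` gives `p(t; x, y) ~ γ_d t^{-d/2}`. The second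
moment yields `φ(θ) = ⟨φ''(0)θ, θ⟩/2 + o(‖θ‖²)`. If `φ''(0)` degenerates in the direction `θ`, then
`⟨z, θ⟩ = 0` for all `z` with `a z > 0`; if `φ(θ) = 0`, then `⟨z, θ⟩ ∈ 2πℤ` for all such `z`. As
these `z` generate `ℤ^d`, the same holds for every coordinate of `θ`, so `φ''(0)` is negative
definite and `θ = 0` is the only zero of `φ` in `[-π, π]^d`. Rescaling `θ = v/√t` and dominating the
integrand by a Gaussian gives the local limit, and integrating `u^{-d/2}` over `(t, ∞)` produces the
factor `1/(d/2 - 1)`. -/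

section TailIntegral

variable {E : Type*} [NormedAddCommGroup E] [NormedSpace ℝ E]

theorem rpow_smul_integral_Ioi_eq (f : ℝ → E) (s : ℝ) {t : ℝ} (ht : 0 < t) :
    t ^ (s - 1) • ∫ u in Set.Ioi t, f u =
      ∫ x in Set.Ioi (1 : ℝ), x ^ (-s) • ((t * x) ^ s • f (t * x)) := by
  calc t ^ (s - 1) • ∫ u in Set.Ioi t, f u
      = t ^ s • ∫ x in Set.Ioi (1 : ℝ), f (t * x) := by
        have hsub := integral_comp_mul_left_Ioi' f 1 ht
        rw [mul_one] at hsub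
        rw [← hsub, smul_smul, ← Real.rpow_add_one ht.ne', sub_add_cancel]
    _ = _ := by
        rw [← integral_smul]
        refine setIntegral_congr_fun measurableSet_Ioi fun x (hx : 1 < x) => ?_
        have hx0 : 0 < x := one_pos.trans hx
        have hs : x ^ s ≠ 0 := (Real.rpow_pos_of_pos hx0 s).ne'
        rw [smul_smul, Real.mul_rpow ht.le hx0.le, Real.rpow_neg hx0.le]
        congr 1
        field_simp

theorem integral_Ioi_one_rpow_neg {s : ℝ} (hs : 1 < s) :
    ∫ x in Set.Ioi (1 : ℝ), x ^ (-s) = (s - 1)⁻¹ := by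
  rw [integral_Ioi_rpow_of_lt (by linarith) one_pos, Real.one_rpow, neg_div, ← div_neg, one_div,
    neg_add', neg_neg]

theorem tendsto_rpow_smul_integral_Ioi [CompleteSpace E] {f : ℝ → E} {s : ℝ} {c : E} (hs : 1 < s)
    (hf : AEStronglyMeasurable f) (hlim : Tendsto (fun u => u ^ s • f u) atTop (𝓝 c)) :
    Tendsto (fun t => t ^ (s - 1) • ∫ u in Set.Ioi t, f u) atTop (𝓝 ((s - 1)⁻¹ • c)) := by
  obtain ⟨T, hT⟩ := eventually_atTop.1 (hlim.norm.eventually (gt_mem_nhds (lt_add_one ‖c‖)))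
  rw [← integral_Ioi_one_rpow_neg hs, ← integral_smul_const]
  suffices Tendsto (fun t => ∫ x in Set.Ioi (1 : ℝ), x ^ (-s) • ((t * x) ^ s • f (t * x))) atTop
      (𝓝 (∫ x in Set.Ioi (1 : ℝ), x ^ (-s) • c)) from
    this.congr' <| (eventually_gt_atTop 0).mono fun t ht => (rpow_smul_integral_Ioi_eq f s ht).symm
  refine tendsto_integral_filter_of_dominated_convergence (fun x => x ^ (-s) * (‖c‖ + 1))
    ?_ ?_ ((integrableOn_Ioi_rpow_of_lt (by linarith) one_pos).mul_const _) ?_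
  · filter_upwards [eventually_gt_atTop 0] with t ht
    have hscale : Measure.QuasiMeasurePreserving (fun x : ℝ => t * x) volume volume :=
      ⟨by fun_prop, by
        rw [Real.map_volume_mul_left ht.ne']; exact Measure.smul_absolutelyContinuous⟩
    have hpow (p : ℝ) : Measurable fun x : ℝ => x ^ p := measurable_id.pow_const p
    exact (hpow _).aestronglyMeasurable.smul <|
      ((hpow s).comp (measurable_const_mul t)).aestronglyMeasurable.smul
        (hf.comp_quasiMeasurePreserving hscale).restrict
  · filter_upwards [eventually_ge_atTop T, eventually_gt_atTop 0] with t htT ht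
    filter_upwards [self_mem_ae_restrict measurableSet_Ioi] with x (hx : 1 < x)
    rw [norm_smul, Real.norm_of_nonneg (by positivity)]
    gcongr
    exact (hT (t * x) (by nlinarith)).le
  · filter_upwards [self_mem_ae_restrict measurableSet_Ioi] with x (hx : 1 < x)
    exact (hlim.comp (tendsto_id.atTop_mul_const (by linarith))).const_smul _

end TailIntegral

section Laplace

theorem aestronglyMeasurable_indicator_comp {X Y Z : Type*} [TopologicalSpace X]
    [MeasurableSpace X] [OpensMeasurableSpace X] [TopologicalSpace Y] [TopologicalSpace Z]
    [TopologicalSpace.PseudoMetrizableSpace Z] [SecondCountableTopologyEither X Z] [Zero Z]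
    {μ : Measure X} {K : Set Y} {f : Y → Z} {g : X → Y} (hK : IsClosed K)
    (hf : ContinuousOn f K) (hg : Continuous g) :
    AEStronglyMeasurable (fun x => K.indicator f (g x)) μ := by
  have hpre : MeasurableSet (g ⁻¹' K) := (hK.preimage hg).measurableSet
  exact (aestronglyMeasurable_indicator_iff hpre).2 <|
    (hf.comp hg.continuousOn (Set.mapsTo_preimage g K)).aestronglyMeasurable hpre

variable {E : Type*} [NormedAddCommGroup E]

theorem exists_le_neg_mul_norm_sq_of_isLittleO {K : Set E} {φ q : E → ℝ} {c : ℝ}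
    (hK : IsCompact K) (hφ : ContinuousOn φ K) (hneg : ∀ x ∈ K, x ≠ 0 → φ x < 0)
    (hc : 0 < c) (hq : ∀ x, c * ‖x‖ ^ 2 ≤ q x)
    (hφq : (fun x => φ x + q x) =o[𝓝 0] fun x => ‖x‖ ^ 2) :
    ∃ b > 0, ∀ x ∈ K, φ x ≤ -b * ‖x‖ ^ 2 := by
  obtain ⟨δ, hδ, hnear⟩ := Metric.eventually_nhds_iff_ball.1 (hφq.def (half_pos hc))
  have hne {x : E} (hx : x ∈ K \ Metric.ball 0 δ) : x ≠ 0 := by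
    rintro rfl
    exact hx.2 (Metric.mem_ball_self hδ)
  have hpos {x : E} (hx : x ∈ K \ Metric.ball 0 δ) : 0 < ‖x‖ ^ 2 :=
    pow_pos (norm_pos_iff.2 (hne hx)) 2
  obtain ⟨m, hm, hfar⟩ := (hK.diff Metric.isOpen_ball).exists_forall_le' (a := 0)
    (f := fun x => -φ x / ‖x‖ ^ 2)
    ((hφ.mono Set.sdiff_subset).neg.div (by fun_prop) fun x hx => (hpos hx).ne')
    fun x hx => div_pos (neg_pos.2 (hneg x hx.1 (hne hx))) (hpos hx)
  refine ⟨min (c / 2) m, by positivity, fun x hx => ?_⟩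
  rw [neg_mul, le_neg]
  by_cases hxδ : x ∈ Metric.ball 0 δ
  · have htaylor := hnear x hxδ
    rw [norm_pow, norm_norm] at htaylor
    calc min (c / 2) m * ‖x‖ ^ 2 ≤ c / 2 * ‖x‖ ^ 2 := by gcongr; exact min_le_left _ _
      _ ≤ -φ x := by linarith [hq x, Real.le_norm_self (φ x + q x)]
  · calc min (c / 2) m * ‖x‖ ^ 2 ≤ m * ‖x‖ ^ 2 := by gcongr; exact min_le_right _ _
      _ ≤ -φ x := (le_div_iff₀ (hpos ⟨hx, hxδ⟩)).1 (hfar x ⟨hx, hxδ⟩)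

variable [NormedSpace ℝ E]

theorem exists_mul_norm_sq_le_of_posDef [FiniteDimensional ℝ E] {Q : QuadraticForm ℝ E}
    (hQ : Q.PosDef) : ∃ c > 0, ∀ v, c * ‖v‖ ^ 2 ≤ Q v := by
  have hcont : Continuous Q := by
    let B := (QuadraticMap.associated Q).toContinuousBilinearMap
    exact (show Continuous fun v => B v v by fun_prop).congr
      (QuadraticMap.associated_eq_self_apply ℝ Q)
  have : ProperSpace E := FiniteDimensional.proper_real E
  obtain ⟨c, hc, hle⟩ := (isCompact_sphere (0 : E) 1).exists_forall_le' hcont.continuousOn (a := 0)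
    fun v hv => hQ v (ne_zero_of_mem_unit_sphere ⟨v, hv⟩)
  refine ⟨c, hc, fun v => ?_⟩
  rcases eq_or_ne v 0 with rfl | hv
  · simp
  have hnorm : ‖v‖ ≠ 0 := norm_ne_zero_iff.2 hv
  have hunit := hle (‖v‖⁻¹ • v) (by simp [norm_smul, hnorm])
  rw [QuadraticMap.map_smul, smul_eq_mul] at hunit
  calc c * ‖v‖ ^ 2 ≤ ‖v‖⁻¹ * ‖v‖⁻¹ * Q v * ‖v‖ ^ 2 := by gcongr
    _ = Q v := by field_simp

theorem tendsto_inv_sqrt_smul_atTop (v : E) :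
    Tendsto (fun t : ℝ => (√t)⁻¹ • v) atTop (𝓝 0) := by
  simpa using Real.tendsto_sqrt_atTop.inv_tendsto_atTop.smul_const v

theorem tendsto_comp_inv_sqrt_smul_mul {φ : E → ℝ} {Q : QuadraticForm ℝ E}
    (hφQ : (fun x => φ x + Q x) =o[𝓝 0] fun x => ‖x‖ ^ 2) (v : E) :
    Tendsto (fun t : ℝ => φ ((√t)⁻¹ • v) * t) atTop (𝓝 (-Q v)) := by
  have hrem : Tendsto (fun t : ℝ => (φ ((√t)⁻¹ • v) + Q ((√t)⁻¹ • v)) * t) atTop (𝓝 0) := by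
    have hscale : (fun t : ℝ => ‖(√t)⁻¹ • v‖ ^ 2) =O[atTop] fun t => t⁻¹ := by
      refine (isBigO_const_mul_self (‖v‖ ^ 2) _ _).congr' ?_ EventuallyEq.rfl
      filter_upwards [eventually_ge_atTop 0] with t ht
      rw [norm_smul, mul_pow, norm_inv, inv_pow, Real.norm_eq_abs, sq_abs, Real.sq_sqrt ht,
        mul_comm]
    simpa using ((hφQ.comp_tendsto (tendsto_inv_sqrt_smul_atTop v)).trans_isBigO
      hscale).tendsto_div_nhds_zero
  rw [← zero_sub]
  refine (hrem.sub_const (Q v)).congr' ?_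
  filter_upwards [eventually_gt_atTop 0] with t ht
  have hQt : Q ((√t)⁻¹ • v) * t = Q v := by
    rw [QuadraticMap.map_smul, ← mul_inv, Real.mul_self_sqrt ht.le, smul_eq_mul]
    field_simp
  rw [add_mul, hQt, add_sub_cancel_right]

variable {F : Type*} [NormedAddCommGroup F] [NormedSpace ℝ F]

theorem norm_indicator_exp_smul_le {K : Set E} {φ : E → ℝ} {A : E → F} {b C t : ℝ}
    (hφ : ∀ x ∈ K, φ x ≤ -b * ‖x‖ ^ 2) (hA : ∀ x ∈ K, ‖A x‖ ≤ C) (ht : 0 < t) (v : E) :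
    ‖K.indicator (fun x => Real.exp (φ x * t) • A x) ((√t)⁻¹ • v)‖ ≤
      Real.exp (-b * ‖v‖ ^ 2) * |C| := by
  by_cases hv : (√t)⁻¹ • v ∈ K
  · have hexp : φ ((√t)⁻¹ • v) * t ≤ -b * ‖v‖ ^ 2 := by
      calc φ ((√t)⁻¹ • v) * t ≤ -b * ‖(√t)⁻¹ • v‖ ^ 2 * t := by gcongr; exact hφ _ hv
        _ = -b * ‖v‖ ^ 2 := by
          rw [norm_smul, norm_inv, Real.norm_of_nonneg (Real.sqrt_nonneg t), mul_pow, inv_pow,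
            Real.sq_sqrt ht.le]
          field_simp
    rw [Set.indicator_of_mem hv, norm_smul, Real.norm_of_nonneg (Real.exp_nonneg _)]
    gcongr
    exact (hA _ hv).trans (le_abs_self C)
  · rw [Set.indicator_of_notMem hv, norm_zero]
    positivity

variable [FiniteDimensional ℝ E] [MeasurableSpace E] [BorelSpace E] (μ : Measure E)
  [μ.IsAddHaarMeasure]

theorem integrable_exp_neg_mul_norm_sq {b : ℝ} (hb : 0 < b) :
    Integrable (fun v => Real.exp (-b * ‖v‖ ^ 2)) μ := by
  rcases subsingleton_or_nontrivial E with hE | hE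
  · exact .of_finite
  rw [integrable_fun_norm_addHaar μ (f := fun y => Real.exp (-b * y ^ 2))]
  refine ((integrable_rpow_mul_exp_neg_mul_sq hb (s := (Module.finrank ℝ E - 1 : ℕ))
    ?_).integrableOn).congr_fun (fun y _ => by simp) measurableSet_Ioi
  exact neg_one_lt_zero.trans_le (Nat.cast_nonneg _)

theorem rpow_finrank_smul_setIntegral_eq (f : E → F) {K : Set E} (hK : MeasurableSet K) {t : ℝ}
    (ht : 0 ≤ t) : t ^ (Module.finrank ℝ E / 2 : ℝ) • ∫ x in K, f x ∂μ =
      ∫ v, K.indicator f ((√t)⁻¹ • v) ∂μ := by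
  rw [Measure.integral_comp_inv_smul_of_nonneg μ _ (Real.sqrt_nonneg t), integral_indicator hK,
    Real.sqrt_eq_rpow, ← Real.rpow_natCast, ← Real.rpow_mul ht]
  congr 2
  ring

theorem tendsto_rpow_smul_setIntegral_exp_smul [CompleteSpace F] {K : Set E} {φ : E → ℝ}
    {Q : QuadraticForm ℝ E} {A : E → F} (hK : IsCompact K) (hK0 : K ∈ 𝓝 0) (hφ : ContinuousOn φ K)
    (hneg : ∀ x ∈ K, x ≠ 0 → φ x < 0) (hQ : Q.PosDef)
    (hφQ : (fun x => φ x + Q x) =o[𝓝 0] fun x => ‖x‖ ^ 2) (hA : ContinuousOn A K) :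
    Tendsto (fun t : ℝ => t ^ (Module.finrank ℝ E / 2 : ℝ) • ∫ x in K, Real.exp (φ x * t) • A x ∂μ)
      atTop (𝓝 ((∫ v, Real.exp (-Q v) ∂μ) • A 0)) := by
  obtain ⟨c, hc, hcQ⟩ := exists_mul_norm_sq_le_of_posDef hQ
  obtain ⟨b, hb, hφb⟩ := exists_le_neg_mul_norm_sq_of_isLittleO hK hφ hneg hc hcQ hφQ
  obtain ⟨C, hC⟩ := hK.exists_bound_of_continuousOn hA
  rw [← integral_smul_const]
  suffices Tendsto (fun t : ℝ => ∫ v, K.indicator (fun x => Real.exp (φ x * t) • A x)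
      ((√t)⁻¹ • v) ∂μ) atTop (𝓝 (∫ v, Real.exp (-Q v) • A 0 ∂μ)) from
    this.congr' <| (eventually_ge_atTop 0).mono fun t ht =>
      (rpow_finrank_smul_setIntegral_eq μ _ hK.measurableSet ht).symm
  refine tendsto_integral_filter_of_dominated_convergence (fun v => Real.exp (-b * ‖v‖ ^ 2) * |C|)
    (.of_forall fun t => aestronglyMeasurable_indicator_comp hK.isClosed (by fun_prop)
      (continuous_const_smul _))
    ((eventually_gt_atTop 0).mono fun t ht =>
      .of_forall (norm_indicator_exp_smul_le hφb hC ht))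
    ((integrable_exp_neg_mul_norm_sq μ hb).mul_const _) (.of_forall fun v => ?_)
  have hv := tendsto_inv_sqrt_smul_atTop v
  refine (((Real.continuous_exp.tendsto _).comp (tendsto_comp_inv_sqrt_smul_mul hφQ v)).smul
    ((hA.continuousAt hK0).tendsto.comp hv)).congr' ?_
  filter_upwards [hv hK0] with t (ht : (√t)⁻¹ • v ∈ K)
  rw [Set.indicator_of_mem ht, Function.comp_apply, Function.comp_apply]

end Laplace

section Gaussian

variable {ι : Type*} [Fintype ι]

theorem integral_comp_mulVec [DecidableEq ι] {E : Type*} [NormedAddCommGroup E] [NormedSpace ℝ E]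
    {B : Matrix ι ι ℝ} (hB : B.det ≠ 0) (f : (ι → ℝ) → E) :
    ∫ v, f (B.mulVec v) = |B.det|⁻¹ • ∫ w, f w := by
  have hemb : MeasurableEmbedding (Matrix.toLin' B) :=
    (LinearMap.continuous_of_finiteDimensional _).measurableEmbedding <|
      Matrix.mulVec_injective_of_isUnit ((Matrix.isUnit_iff_isUnit_det B).2 hB.isUnit)
  have hmap := hemb.integral_map (μ := volume) f
  rwa [Real.map_matrix_volume_pi_eq_smul_volume_pi hB, integral_smul_measure,
    ENNReal.toReal_ofReal (abs_nonneg _), abs_inv, eq_comm] at hmap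

theorem integral_exp_neg_sum_sq_div_two :
    ∫ w : ι → ℝ, Real.exp (-(∑ i, w i ^ 2) / 2) = (2 * π) ^ (Fintype.card ι / 2 : ℝ) := by
  calc ∫ w : ι → ℝ, Real.exp (-(∑ i, w i ^ 2) / 2)
      = ∫ w : ι → ℝ, ∏ i, Real.exp (-(1 / 2) * w i ^ 2) := by
        congr with w
        rw [← Real.exp_sum, ← Finset.mul_sum]
        ring_nf
    _ = √(2 * π) ^ Fintype.card ι := by
        rw [integral_fintype_prod_volume_eq_pow (fun x : ℝ => Real.exp (-(1 / 2) * x ^ 2)),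
          integral_gaussian, div_div_eq_mul_div, div_one, mul_comm]
    _ = (2 * π) ^ (Fintype.card ι / 2 : ℝ) := by
        rw [Real.sqrt_eq_rpow, ← Real.rpow_natCast, ← Real.rpow_mul (by positivity),
          one_div_mul_eq_div]

open scoped MatrixOrder in
theorem integral_exp_neg_dotProduct_mulVec_div_two [DecidableEq ι] {M : Matrix ι ι ℝ}
    (hM : M.PosDef) :
    ∫ v : ι → ℝ, Real.exp (-(v ⬝ᵥ M.mulVec v) / 2) =
      (2 * π) ^ (Fintype.card ι / 2 : ℝ) * (√M.det)⁻¹ := by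
  obtain ⟨B, rfl⟩ := CStarAlgebra.nonneg_iff_eq_star_mul_self.mp hM.posSemidef.nonneg
  rw [Matrix.star_eq_conjTranspose, Matrix.conjTranspose_eq_transpose_of_trivial] at hM ⊢
  have hdet : (B.transpose * B).det = B.det ^ 2 := by
    rw [Matrix.det_mul, Matrix.det_transpose, sq]
  have hB : B.det ≠ 0 := fun h0 => hM.det_pos.ne' (by rw [hdet, h0, zero_pow two_ne_zero])
  have hform (v : ι → ℝ) : v ⬝ᵥ (B.transpose * B).mulVec v = ∑ i, B.mulVec v i ^ 2 := by
    rw [← Matrix.mulVec_mulVec, Matrix.dotProduct_mulVec, Matrix.vecMul_transpose]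
    simp only [dotProduct, sq]
  simp only [hform]
  rw [integral_comp_mulVec hB fun w => Real.exp (-(∑ i, w i ^ 2) / 2),
    integral_exp_neg_sum_sq_div_two, hdet, Real.sqrt_sq_eq_abs, smul_eq_mul, mul_comm]

theorem tendsto_rpow_smul_setIntegral_exp_smul_of_posDef [DecidableEq ι] {F : Type*}
    [NormedAddCommGroup F] [NormedSpace ℝ F] [CompleteSpace F] {M : Matrix ι ι ℝ}
    {K : Set (ι → ℝ)} {φ : (ι → ℝ) → ℝ} {A : (ι → ℝ) → F} (hK : IsCompact K) (hK0 : K ∈ 𝓝 0)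
    (hφ : ContinuousOn φ K) (hneg : ∀ x ∈ K, x ≠ 0 → φ x < 0) (hM : M.PosDef)
    (hφM : (fun x => φ x + x ⬝ᵥ M.mulVec x / 2) =o[𝓝 0] fun x => ‖x‖ ^ 2)
    (hA : ContinuousOn A K) :
    Tendsto (fun t : ℝ => t ^ (Fintype.card ι / 2 : ℝ) • ∫ x in K, Real.exp (φ x * t) • A x)
      atTop (𝓝 (((2 * π) ^ (Fintype.card ι / 2 : ℝ) * (√M.det)⁻¹) • A 0)) := by
  let Q : QuadraticForm ℝ (ι → ℝ) := (2⁻¹ : ℝ) • M.toQuadraticForm'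
  have hQ (x : ι → ℝ) : Q x = x ⬝ᵥ M.mulVec x / 2 := by
    rw [div_eq_inv_mul]
    simp [Q, Matrix.toQuadraticForm', Matrix.toLinearMap₂'_apply']
  have hlim := tendsto_rpow_smul_setIntegral_exp_smul volume (Q := Q) hK hK0 hφ hneg
    (hM.toQuadraticForm'.smul (by norm_num)) (by simpa only [hQ] using hφM) hA
  simpa only [hQ, Module.finrank_fintype_fun_eq_card, ← neg_div,
    integral_exp_neg_dotProduct_mulVec_div_two hM] using hlim

end Gaussian

section Series

theorem isLittleO_tsum_mul_comp {Z E H : Type*} [NormedAddCommGroup E] [NormedSpace ℝ E]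
    [NormedAddCommGroup H] [NormedSpace ℝ H] {a : Z → ℝ} {ℓ : Z → E →L[ℝ] H} {g : H → ℝ} {n : ℕ}
    {C : ℝ} (hs : Summable fun z => ‖a z‖ * ‖ℓ z‖ ^ n) (hg : g =o[𝓝 0] fun x => ‖x‖ ^ n)
    (hC : ∀ x, ‖g x‖ ≤ C * ‖x‖ ^ n) :
    (fun θ => ∑' z, a z * g (ℓ z θ)) =o[𝓝 0] fun θ => ‖θ‖ ^ n := by
  have hbound (z : Z) (θ : E) : ‖a z * g (ℓ z θ)‖ ≤ |C| * (‖a z‖ * ‖ℓ z‖ ^ n) * ‖θ‖ ^ n := by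
    calc ‖a z * g (ℓ z θ)‖ ≤ ‖a z‖ * (|C| * (‖ℓ z‖ * ‖θ‖) ^ n) := by
          rw [norm_mul]
          gcongr
          refine (hC _).trans ?_
          gcongr
          exacts [le_abs_self C, (ℓ z).le_opNorm θ]
      _ = |C| * (‖a z‖ * ‖ℓ z‖ ^ n) * ‖θ‖ ^ n := by ring
  refine isLittleO_of_tendsto (fun θ hθ => ?_) ?_
  · refine (tsum_congr fun z => norm_le_zero_iff.1 ?_).trans tsum_zero
    simpa only [hθ, mul_zero] using hbound z θ
  · simp only [← tsum_div_const]
    rw [← tsum_zero (α := ℝ) (β := Z)]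
    refine tendsto_tsum_of_dominated_convergence (hs.mul_left |C|) (fun z => ?_)
      (.of_forall fun θ z => ?_)
    · have hℓ : Tendsto (ℓ z) (𝓝 0) (𝓝 0) := by simpa using (ℓ z).continuous.tendsto 0
      exact (((hg.comp_tendsto hℓ).trans_isBigO
        (((ℓ z).isBigO_id (𝓝 0)).norm_norm.pow n)).const_mul_left (a z)).tendsto_div_nhds_zero
    · rw [norm_div, norm_pow, norm_norm]
      exact div_le_of_le_mul₀ (by positivity) (by positivity) (hbound z θ)

theorem tsum_mul_pos {Z : Type*} [Zero Z] {a f : Z → ℝ} {z : Z} (ha : ∀ z, z ≠ 0 → 0 ≤ a z)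
    (hf : ∀ z, 0 ≤ f z) (hf0 : f 0 = 0) (hs : Summable fun z => a z * f z) (haz : 0 < a z)
    (hfz : f z ≠ 0) : 0 < ∑' z, a z * f z := by
  refine hs.tsum_pos (fun w => ?_) z (mul_pos haz ((hf z).lt_of_ne' hfz))
  rcases eq_or_ne w 0 with rfl | hw
  · rw [hf0, mul_zero]
  · exact mul_nonneg (ha w hw) (hf w)

end Series

section Cosine

theorem norm_mul_cos_le (b x : ℝ) : ‖b * Real.cos x‖ ≤ ‖b‖ := by
  rw [norm_mul]
  exact mul_le_of_le_one_right (norm_nonneg b) (Real.abs_cos_le_one x)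

theorem norm_cos_sub_one_add_sq_div_two_le (x : ℝ) :
    ‖Real.cos x - 1 + x ^ 2 / 2‖ ≤ 1 / 2 * ‖x‖ ^ 2 := by
  rw [Real.norm_of_nonneg (by linarith [Real.one_sub_sq_div_two_le_cos (x := x)]),
    Real.norm_eq_abs, sq_abs]
  linarith [Real.cos_le_one x]

theorem cos_sub_one_add_sq_div_two_isLittleO :
    (fun x : ℝ => Real.cos x - 1 + x ^ 2 / 2) =o[𝓝 0] fun x => ‖x‖ ^ 2 := by
  have hquartic : (fun x : ℝ => Real.cos x - 1 + x ^ 2 / 2) =O[𝓝 0] fun x => ‖x‖ ^ 4 := by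
    refine .of_bound (5 / 96) ?_
    filter_upwards [Metric.closedBall_mem_nhds (0 : ℝ) one_pos] with x hx
    have hcos := Real.cos_bound (by simpa using hx)
    rw [Real.norm_eq_abs, norm_pow, norm_norm, Real.norm_eq_abs, mul_comm]
    rwa [sub_sub_eq_add_sub, add_sub_right_comm] at hcos
  exact hquartic.trans_isLittleO (isLittleO_norm_pow_norm_pow (by norm_num))

theorem mem_zmultiples_two_pi_iff_cos_eq_one {x : ℝ} :
    x ∈ AddSubgroup.zmultiples (2 * π) ↔ Real.cos x = 1 := by
  simp only [AddSubgroup.mem_zmultiples_iff, Real.cos_eq_one_iff, zsmul_eq_mul]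

end Cosine

section LatticePairing

variable {ι : Type*} [Fintype ι]

/-- The pairing `⟨z, θ⟩ = ∑ i, z i * θ i` of a lattice point `z` with a frequency `θ`: additive in
`z` and, to have operator norms available, continuous linear in `θ`. -/
def latticePairing : (ι → ℤ) →+ (ι → ℝ) →L[ℝ] ℝ where
  toFun z := ∑ i, (z i : ℝ) • ContinuousLinearMap.proj i
  map_zero' := by simp
  map_add' z w := by simp [add_smul, Finset.sum_add_distrib]

theorem latticePairing_apply (z : ι → ℤ) (θ : ι → ℝ) :
    latticePairing z θ = ∑ i, (z i : ℝ) * θ i := by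
  simp [latticePairing]

theorem norm_latticePairing_sq_le (z : ι → ℤ) :
    ‖latticePairing z‖ ^ 2 ≤ Fintype.card ι * ∑ i, (z i : ℝ) ^ 2 := by
  refine (Real.le_sqrt (norm_nonneg _) (by positivity)).1 ?_
  refine ContinuousLinearMap.opNorm_le_bound _ (Real.sqrt_nonneg _) fun θ => ?_
  have hθ : ∑ i, θ i ^ 2 ≤ Fintype.card ι * ‖θ‖ ^ 2 := by
    calc ∑ i, θ i ^ 2 ≤ ∑ _i : ι, ‖θ‖ ^ 2 :=
          Finset.sum_le_sum fun i _ => sq_le_sq.2 (by simpa using norm_le_pi_norm θ i)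
      _ = Fintype.card ι * ‖θ‖ ^ 2 := by simp
  rw [Real.norm_eq_abs, latticePairing_apply, ← Real.sqrt_sq (norm_nonneg θ),
    ← Real.sqrt_mul (by positivity)]
  refine Real.abs_le_sqrt ?_
  calc (∑ i, (z i : ℝ) * θ i) ^ 2 ≤ (∑ i, (z i : ℝ) ^ 2) * ∑ i, θ i ^ 2 :=
        Finset.sum_mul_sq_le_sq_mul_sq _ _ _
    _ ≤ (∑ i, (z i : ℝ) ^ 2) * (Fintype.card ι * ‖θ‖ ^ 2) := by gcongr
    _ = Fintype.card ι * (∑ i, (z i : ℝ) ^ 2) * ‖θ‖ ^ 2 := by ring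

theorem exists_latticePairing_notMem {s : Set (ι → ℤ)} (hs : AddSubgroup.closure s = ⊤)
    (S : AddSubgroup ℝ) {θ : ι → ℝ} {i : ι} (hθ : θ i ∉ S) :
    ∃ z ∈ s, latticePairing z θ ∉ S := by
  classical
  by_contra! hmem
  let evalAt : (ι → ℤ) →+ ℝ := (ContinuousLinearMap.apply ℝ ℝ θ : _ →+ ℝ).comp latticePairing
  have hle : AddSubgroup.closure s ≤ S.comap evalAt := (AddSubgroup.closure_le _).2 hmem
  refine hθ ?_
  have hi : Pi.single i 1 ∈ S.comap evalAt := hle (hs ▸ AddSubgroup.mem_top _)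
  simpa [evalAt, latticePairing_apply, Pi.single_apply] using hi

theorem summable_norm_mul_norm_latticePairing_sq {a : (ι → ℤ) → ℝ}
    (hvar : Summable fun z : ι → ℤ => (∑ i, (z i : ℝ) ^ 2) * a z) :
    Summable fun z => ‖a z‖ * ‖latticePairing z‖ ^ 2 := by
  refine .of_nonneg_of_le (fun z => by positivity) (fun z => ?_)
    (hvar.norm.mul_left (Fintype.card ι : ℝ))
  rw [norm_mul, Real.norm_of_nonneg (r := ∑ i, (z i : ℝ) ^ 2) (by positivity), ← mul_assoc,
    mul_comm]
  gcongr
  exact norm_latticePairing_sq_le z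

theorem summable_mul_apply_mul_apply {a : (ι → ℤ) → ℝ}
    (hvar : Summable fun z : ι → ℤ => (∑ i, (z i : ℝ) ^ 2) * a z) (i j : ι) :
    Summable fun z : ι → ℤ => a z * (z i : ℝ) * (z j : ℝ) := by
  refine .of_norm_bounded hvar.norm fun z => ?_
  have hle (k : ι) : (z k : ℝ) ^ 2 ≤ ∑ i, (z i : ℝ) ^ 2 :=
    Finset.single_le_sum (f := fun i => (z i : ℝ) ^ 2) (fun _ _ => sq_nonneg _) (Finset.mem_univ k)
  have hij : ‖(z i : ℝ) * z j‖ ≤ ∑ i, (z i : ℝ) ^ 2 := by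
    have hsq := two_mul_le_add_sq |(z i : ℝ)| |(z j : ℝ)|
    rw [sq_abs, sq_abs] at hsq
    rw [norm_mul, Real.norm_eq_abs, Real.norm_eq_abs]
    linarith [hle i, hle j]
  rw [mul_assoc, norm_mul, norm_mul (∑ i, (z i : ℝ) ^ 2), mul_comm]
  gcongr
  exact hij.trans (Real.le_norm_self _)

end LatticePairing

section TransitionProbability

variable {d : ℕ} {a : (Fin d → ℤ) → ℝ}

theorem phiSymb_eq_tsum_latticePairing (θ : Fin d → ℝ) :
    phiSymb d a θ = ∑' z, a z * Real.cos (latticePairing z θ) := by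
  simp only [phiSymb, latticePairing_apply]

theorem continuous_phiSymb (ha : Summable a) : Continuous (phiSymb d a) :=
  continuous_tsum (fun z => by fun_prop) ha.norm fun z _ => norm_mul_cos_le (a z) _

theorem hasSum_mul_one_sub_cos_latticePairing (hsum : HasSum a 0) (θ : Fin d → ℝ) :
    HasSum (fun z => a z * (1 - Real.cos (latticePairing z θ))) (-phiSymb d a θ) := by
  have hcos : Summable fun z => a z * Real.cos (latticePairing z θ) :=
    .of_norm_bounded hsum.summable.norm fun z => norm_mul_cos_le (a z) _
  simpa only [mul_sub, mul_one, zero_sub, phiSymb_eq_tsum_latticePairing] using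
    hsum.sub hcos.hasSum

theorem hasSum_mul_latticePairing_sq
    (hvar : Summable fun z : Fin d → ℤ => (∑ i, (z i : ℝ) ^ 2) * a z) (θ : Fin d → ℝ) :
    HasSum (fun z => a z * latticePairing z θ ^ 2) (θ ⬝ᵥ (-hessPhi d a).mulVec θ) := by
  have hexpand (z : Fin d → ℤ) : a z * latticePairing z θ ^ 2 =
      ∑ i, ∑ j, θ i * (a z * (z i : ℝ) * (z j : ℝ) * θ j) := by
    rw [latticePairing_apply, sq, Finset.sum_mul_sum, Finset.mul_sum]
    refine Finset.sum_congr rfl fun i _ => ?_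
    rw [Finset.mul_sum]
    exact Finset.sum_congr rfl fun j _ => by ring
  have hform : θ ⬝ᵥ (-hessPhi d a).mulVec θ =
      ∑ i, ∑ j, θ i * ((∑' z : Fin d → ℤ, a z * (z i : ℝ) * (z j : ℝ)) * θ j) := by
    simp [dotProduct, Matrix.mulVec, hessPhi, Finset.mul_sum]
  rw [funext hexpand, hform]
  exact hasSum_sum fun i _ => hasSum_sum fun j _ =>
    ((summable_mul_apply_mul_apply hvar i j).hasSum.mul_right _).mul_left _

theorem phiSymb_add_hessPhi_isLittleO (hsum : HasSum a 0)
    (hvar : Summable fun z : Fin d → ℤ => (∑ i, (z i : ℝ) ^ 2) * a z) :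
    (fun θ => phiSymb d a θ + θ ⬝ᵥ (-hessPhi d a).mulVec θ / 2) =o[𝓝 0] fun θ => ‖θ‖ ^ 2 := by
  have hremainder (θ : Fin d → ℝ) : phiSymb d a θ + θ ⬝ᵥ (-hessPhi d a).mulVec θ / 2 =
      ∑' z, a z * (Real.cos (latticePairing z θ) - 1 + latticePairing z θ ^ 2 / 2) := by
    have hcos := (hasSum_mul_one_sub_cos_latticePairing hsum θ).neg
    have hquad := (hasSum_mul_latticePairing_sq hvar θ).div_const 2
    rw [← neg_neg (phiSymb d a θ), ← (hcos.add hquad).tsum_eq]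
    exact tsum_congr fun z => by ring
  simp only [hremainder]
  exact isLittleO_tsum_mul_comp (g := fun x => Real.cos x - 1 + x ^ 2 / 2)
    (summable_norm_mul_norm_latticePairing_sq hvar)
    cos_sub_one_add_sq_div_two_isLittleO norm_cos_sub_one_add_sq_div_two_le

theorem posDef_neg_hessPhi (hpos : ∀ z : Fin d → ℤ, z ≠ 0 → 0 ≤ a z)
    (hvar : Summable fun z : Fin d → ℤ => (∑ i, (z i : ℝ) ^ 2) * a z)
    (hirr : AddSubgroup.closure {z : Fin d → ℤ | 0 < a z} = ⊤) : (-hessPhi d a).PosDef := by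
  refine Matrix.PosDef.of_dotProduct_mulVec_pos ?_ fun {v} hv => ?_
  · ext i j
    simp only [Matrix.conjTranspose_apply, Matrix.neg_apply, hessPhi, Matrix.of_apply, neg_neg,
      star_trivial, mul_right_comm]
  · obtain ⟨i, hi⟩ := Function.ne_iff.1 hv
    obtain ⟨z, hz, hzv⟩ := exists_latticePairing_notMem hirr ⊥ (mt AddSubgroup.mem_bot.1 hi)
    have hquad := hasSum_mul_latticePairing_sq hvar v
    rw [star_trivial, ← hquad.tsum_eq]
    exact tsum_mul_pos hpos (fun z => sq_nonneg _) (by simp) hquad.summable hz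
      (pow_ne_zero 2 (mt AddSubgroup.mem_bot.2 hzv))

theorem phiSymb_neg_of_cos_ne_one (hpos : ∀ z : Fin d → ℤ, z ≠ 0 → 0 ≤ a z) (hsum : HasSum a 0)
    (hirr : AddSubgroup.closure {z : Fin d → ℤ | 0 < a z} = ⊤) {θ : Fin d → ℝ} {i : Fin d}
    (hθ : Real.cos (θ i) ≠ 1) : phiSymb d a θ < 0 := by
  obtain ⟨z, hz, hzθ⟩ := exists_latticePairing_notMem hirr (AddSubgroup.zmultiples (2 * π))
    (mt mem_zmultiples_two_pi_iff_cos_eq_one.1 hθ)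
  have hone := hasSum_mul_one_sub_cos_latticePairing hsum θ
  rw [← neg_pos, ← hone.tsum_eq]
  exact tsum_mul_pos hpos (fun z => sub_nonneg.2 (Real.cos_le_one _)) (by simp) hone.summable hz
    (sub_ne_zero.2 fun hcos => hzθ (mem_zmultiples_two_pi_iff_cos_eq_one.2 hcos.symm))

theorem phiSymb_neg_of_mem_Icc (hpos : ∀ z : Fin d → ℤ, z ≠ 0 → 0 ≤ a z) (hsum : HasSum a 0)
    (hirr : AddSubgroup.closure {z : Fin d → ℤ | 0 < a z} = ⊤) {θ : Fin d → ℝ}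
    (hθ : θ ∈ Set.Icc (fun _ => -π) (fun _ => π)) (hθ0 : θ ≠ 0) : phiSymb d a θ < 0 := by
  obtain ⟨i, hi⟩ := Function.ne_iff.1 hθ0
  refine phiSymb_neg_of_cos_ne_one hpos hsum hirr (i := i) fun hcos => hi ?_
  have hlower : -π ≤ θ i := hθ.1 i
  have hupper : θ i ≤ π := hθ.2 i
  exact (Real.cos_eq_one_iff_of_lt_of_lt (by linarith [Real.pi_pos])
    (by linarith [Real.pi_pos])).1 hcos

theorem gammaConst_eq_of_posDef (hM : (-hessPhi d a).PosDef) :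
    gammaConst d a =
      ((2 * π) ^ d)⁻¹ * ((2 * π) ^ ((d : ℝ) / 2) * (√(-hessPhi d a).det)⁻¹) := by
  have hdet : (-hessPhi d a).det = |(hessPhi d a).det| := by
    rw [← abs_of_pos hM.det_pos, Matrix.det_neg, abs_mul, abs_pow, abs_neg, abs_one, one_pow,
      one_mul]
  have hpow : (2 * π) ^ d = (2 * π) ^ ((d : ℝ) / 2) * (2 * π) ^ ((d : ℝ) / 2) := by
    rw [← Real.rpow_add (by positivity), add_halves, Real.rpow_natCast]
  rw [gammaConst, hdet, hpow]
  field_simp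

theorem stronglyMeasurable_ptrans (ha : Summable a) (x y : Fin d → ℤ) :
    StronglyMeasurable fun t => ptrans d a t x y := by
  have hφ := continuous_phiSymb ha
  refine .const_mul (.integral_prod_right' (f := fun p : ℝ × (Fin d → ℝ) =>
    Real.exp (phiSymb d a p.2 * p.1) * Real.cos (∑ i, p.2 i * ((y i : ℝ) - (x i : ℝ)))) ?_) _
  exact Continuous.stronglyMeasurable (by fun_prop)

theorem tendsto_rpow_mul_ptrans (hpos : ∀ z : Fin d → ℤ, z ≠ 0 → 0 ≤ a z) (hsum : HasSum a 0)
    (hvar : Summable fun z : Fin d → ℤ => (∑ i, (z i : ℝ) ^ 2) * a z)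
    (hirr : AddSubgroup.closure {z : Fin d → ℤ | 0 < a z} = ⊤) (x y : Fin d → ℤ) :
    Tendsto (fun t : ℝ => t ^ ((d : ℝ) / 2) * ptrans d a t x y) atTop (𝓝 (gammaConst d a)) := by
  have hM := posDef_neg_hessPhi hpos hvar hirr
  have hcube : Set.Icc (fun _ => -π) (fun _ => π) ∈ 𝓝 (0 : Fin d → ℝ) :=
    pi_Icc_mem_nhds (fun _ => neg_lt_zero.2 Real.pi_pos) fun _ => Real.pi_pos
  have hlaplace := tendsto_rpow_smul_setIntegral_exp_smul_of_posDef isCompact_Icc hcube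
    (continuous_phiSymb hsum.summable).continuousOn
    (fun θ => phiSymb_neg_of_mem_Icc hpos hsum hirr) hM (phiSymb_add_hessPhi_isLittleO hsum hvar)
    (A := fun θ => Real.cos (∑ i, θ i * ((y i : ℝ) - (x i : ℝ)))) (by fun_prop)
  simp only [Fintype.card_fin, smul_eq_mul, Pi.zero_apply, zero_mul, Finset.sum_const_zero,
    Real.cos_zero, mul_one] at hlaplace
  rw [gammaConst_eq_of_posDef hM]
  simpa only [ptrans, mul_left_comm] using hlaplace.const_mul ((2 * π) ^ d)⁻¹

end TransitionProbability

theorem tail_integral_asymptotic_general {d : ℕ} {a : (Fin d → ℤ) → ℝ}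
    (hpos : ∀ z : Fin d → ℤ, z ≠ 0 → 0 ≤ a z) (hsum : HasSum a 0)
    (hvar : Summable fun z : Fin d → ℤ => (∑ i, (z i : ℝ) ^ 2) * a z)
    (hirr : AddSubgroup.closure {z : Fin d → ℤ | 0 < a z} = ⊤) (hd3 : 3 ≤ d) (x y : Fin d → ℤ) :
    Tendsto (fun t : ℝ => t ^ ((d : ℝ) / 2 - 1) * ∫ u in Set.Ioi t, ptrans d a u x y) atTop
      (𝓝 (2 * gammaConst d a / ((d : ℝ) - 2))) := by
  have hd : (3 : ℝ) ≤ d := mod_cast hd3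
  have htail := tendsto_rpow_smul_integral_Ioi (by linarith)
    (stronglyMeasurable_ptrans hsum.summable x y).aestronglyMeasurable
    (tendsto_rpow_mul_ptrans hpos hsum hvar hirr x y)
  have hconst : ((d : ℝ) / 2 - 1)⁻¹ • gammaConst d a = 2 * gammaConst d a / ((d : ℝ) - 2) := by
    rw [smul_eq_mul, ← div_eq_inv_mul, div_sub_one two_ne_zero, div_div_eq_mul_div, mul_comm]
  rwa [hconst] at htail

/-- For `d ≥ 3`: `∫_t^∞ p(u;0,r) du ~ 2γ_d/((d-2) t^{d/2-1})` as `t → ∞`. -/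
theorem tail_integral_asymptotic
    (d : ℕ) (hd : 1 ≤ d) (a : (Fin d → ℤ) → ℝ)
    (hpos : ∀ z : Fin d → ℤ, z ≠ 0 → 0 ≤ a z)
    (hneg : a 0 < 0)
    (hsymm : ∀ z : Fin d → ℤ, a (-z) = a z)
    (hsum : HasSum a 0)
    (hvar : Summable fun z : Fin d → ℤ => (∑ i, ((z i : ℝ)) ^ 2) * a z)
    (hirr : AddSubgroup.closure {z : Fin d → ℤ | 0 < a z} = ⊤)
    (hd3 : 3 ≤ d) (r : Fin d → ℤ) :
    Tendsto (fun t : ℝ => t ^ ((d : ℝ) / 2 - 1) * ∫ u in Set.Ioi t, ptrans d a u 0 r) atTop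
      (𝓝 (2 * gammaConst d a / ((d : ℝ) - 2))) :=
  tail_integral_asymptotic_general hpos hsum hvar hirr hd3 0 r
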